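/- If the cubic monotone 3-CNF φ has a one-in-three model, then for τ = {nop, set, swap, free} the union U^{σ1}_φ has both the τ-ESSP and the τ-SSP. -/

import Mathlib

/-!
All gadgets are chains, so an assignment of interactions to the events extends to a region of the
union as soon as each chain, taken by itself, admits a compatible support (`region_of_extends`).
The events with `nop` and `swap` impose no condition on a chain, a `free` event requires support `0`
at all its edges, and a `set` event can change the support in one direction only at the
one-way edges of `G`, `D` (label `z`) and `T0` (labels of variables).

An event `e` is inhibited at `s` by a region in which `e` is `free` and `s` has support `1`. If `e`
does not occur in the gadget of `s`, support `1` on that gadget and `0` elsewhere suffices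
(`inh_of_not_mem`). Otherwise a few assignments, in which `e` is the only `free` event, together
cover all states of the gadget at which `e` does not occur (`inh_of_cover`); once the interactions
along a chain are known, the existence of suitable supports is decided by evaluating `searchB`.
Mostly it is enough to swap one event between `s` and the edge of `e`. Where every event in between
occurs an even number of times, a `set` event at a one-way edge is used in addition.

The model `M` is needed for the event `k` at the states next to `m` and `v`
(`extends_k_model`): `m` and all `v` swap there, no `a` or `w` does, and in each `T0 i` the support
`1` produced by `v` is brought back to `0` by exactly one `set` event, the variable of the clause
that belongs to `M`. All other states at which `k` is to be inhibited are handled by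
`extends_k_var` and `extends_k_fresh`.

Two states of a gadget are separated by swapping a single event or by making `z` or a
variable a `set` event, all other events being `nop` (`sep_all`).
-/

namespace PetriNets

/-- The eight boolean interactions. -/
inductive Interaction : Type
  | nop | inp | out | set | res | swap | used | free
  deriving DecidableEq

/-- The partial function on `{0,1}` (encoded as `Bool`) denoted by an interaction. -/
def Interaction.apply : Interaction → Bool → Option Bool
  | .nop, x => some x
  | .inp, x => if x then some false else none
  | .out, x => if x then none else some true
  | .set, _ => some true
  | .res, _ => some false
  | .swap, x => some (!x)
  | .used, x => if x then some true else none
  | .free, x => if x then none else some false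

/-- A transition system with states `S`, events `E`, a partial transition
function and an initial state. -/
structure TS (S E : Type) where
  delta : S → E → Option S
  init : S

/-- A `τ`-region of a transition system. -/
structure Region (τ : Set Interaction) {S E : Type} (A : TS S E) where
  sup : S → Bool
  sig : E → Interaction
  sig_mem : ∀ e : E, sig e ∈ τ
  consistent : ∀ (s : S) (e : E) (s' : S), A.delta s e = some s' →
    (sig e).apply (sup s) = some (sup s')

/-- The state separation property. -/
def SSP (τ : Set Interaction) {S E : Type} (A : TS S E) : Prop :=
  ∀ s s' : S, s ≠ s' → ∃ R : Region τ A, R.sup s ≠ R.sup s'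

/-- The event state separation property. -/
def ESSP (τ : Set Interaction) {S E : Type} (A : TS S E) : Prop :=
  ∀ (s : S) (e : E), A.delta s e = none →
    ∃ R : Region τ A, (R.sig e).apply (R.sup s) = none

/-- `τ`-feasibility: both the `τ`-SSP and the `τ`-ESSP. -/
def Feasible (τ : Set Interaction) {S E : Type} (A : TS S E) : Prop :=
  SSP τ A ∧ ESSP τ A

/-- A union of transition systems with pairwise disjoint states (disjointness is
enforced by the sigma type of states) over a common event alphabet. -/
def Union (ι : Type) (S : ι → Type) (E : Type) : Type := (i : ι) → TS (S i) E

/-- A `τ`-region of a union: its restriction to every component is a region. -/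
structure URegion (τ : Set Interaction) {ι : Type} {S : ι → Type} {E : Type}
    (U : Union ι S E) where
  sup : (Σ i : ι, S i) → Bool
  sig : E → Interaction
  sig_mem : ∀ e : E, sig e ∈ τ
  consistent : ∀ (i : ι) (s : S i) (e : E) (s' : S i), (U i).delta s e = some s' →
    (sig e).apply (sup ⟨i, s⟩) = some (sup ⟨i, s'⟩)

/-- SSP for unions: distinct states of a common component are separable. -/
def USSP (τ : Set Interaction) {ι : Type} {S : ι → Type} {E : Type}
    (U : Union ι S E) : Prop :=
  ∀ (i : ι) (s s' : S i), s ≠ s' → ∃ R : URegion τ U, R.sup ⟨i, s⟩ ≠ R.sup ⟨i, s'⟩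

/-- ESSP for unions: every event is inhibitable at every state where it does not occur. -/
def UESSP (τ : Set Interaction) {ι : Type} {S : ι → Type} {E : Type}
    (U : Union ι S E) : Prop :=
  ∀ (e : E) (i : ι) (s : S i), (U i).delta s e = none →
    ∃ R : URegion τ U, (R.sig e).apply (R.sup ⟨i, s⟩) = none

/-- The type of nets `{nop, set, swap, free}`, i.e. the single member of `σ1`. -/
def tau1 : Set Interaction :=
  {Interaction.nop, Interaction.set, Interaction.swap, Interaction.free}

/-- Membership in `σ2 = { {nop, set, swap, used} ∪ ω : ω ⊆ {res, free} }`. -/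
def sigma2mem (τ : Set Interaction) : Prop :=
  ∃ ω : Set Interaction, ω ⊆ {Interaction.res, Interaction.free} ∧
    τ = ({Interaction.nop, Interaction.set, Interaction.swap, Interaction.used} :
      Set Interaction) ∪ ω

/-- Direction of an edge of a chain-shaped transition system. -/
inductive Dir : Type
  | fwd | bwd | both
  deriving DecidableEq

def Dir.allowsFwd : Dir → Bool
  | .fwd => true
  | .both => true
  | .bwd => false

def Dir.allowsBwd : Dir → Bool
  | .bwd => true
  | .both => true
  | .fwd => false

def echk {E : Type} [DecidableEq E] (o : Option (E × Dir)) (e : E) (fwd : Bool) : Bool :=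
  match o with
  | none => false
  | some (e', d) => decide (e' = e) && (if fwd then d.allowsFwd else d.allowsBwd)

/-- Transition function of a chain with edge specification `spec`:
`spec[t] = (e, d)` means an edge between states `t` and `t + 1` labelled `e`
with direction `d` (forward, backward or both). -/
def chainDelta {E : Type} [DecidableEq E] (spec : List (E × Dir)) (s : ℕ) (e : E) :
    Option ℕ :=
  if echk spec[s]? e true = true then some (s + 1)
  else if s ≠ 0 ∧ echk spec[s - 1]? e false = true then some (s - 1)
  else none

/-- A chain-shaped transition system with `n + 1` states whose initial state is
the last state of the chain. -/
def chainTS {E : Type} [DecidableEq E] (n : ℕ) (spec : List (E × Dir)) :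
    TS (Fin (n + 1)) E where
  init := Fin.last n
  delta := fun s e => (chainDelta spec s.val e).bind fun r =>
    if h : r < n + 1 then some ⟨r, h⟩ else none

/-- Index set of the gadget transition systems of `U^σ_φ`. -/
inductive GIdx (m : ℕ) : Type
  | H : Fin (4 * m) → GIdx m
  | F0 : GIdx m
  | F1 : GIdx m
  | F2 : GIdx m
  | G : Fin m → GIdx m
  | D : Fin (3 * m) → GIdx m
  | T0 : Fin m → GIdx m
  | T1 : Fin m → GIdx m
  | T2 : Fin m → GIdx m
  | T3 : Fin m → GIdx m
  deriving DecidableEq, Fintype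

/-- Events of the gadgets of `U^σ_φ`; `u g` is the unique fresh event of gadget `g`
and `x vv` is the event of the variable `vv` of `φ`. -/
inductive GEvent (V : Type) (m : ℕ) : Type
  | k : GEvent V m
  | mev : GEvent V m
  | z : GEvent V m
  | q : Fin 4 → GEvent V m
  | v : Fin (4 * m) → GEvent V m
  | w : Fin m → GEvent V m
  | y : Fin m → GEvent V m
  | p : Fin (3 * m) → GEvent V m
  | a : Fin (3 * m) → GEvent V m
  | x : V → GEvent V m
  | u : GIdx m → GEvent V m
  deriving DecidableEq

/-- State spaces of the gadget transition systems. -/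
def GS (m : ℕ) : GIdx m → Type
  | .H _ => Fin 6
  | .F0 => Fin 9
  | .F1 => Fin 6
  | .F2 => Fin 10
  | .G _ => Fin 9
  | .D _ => Fin 9
  | .T0 _ => Fin 18
  | .T1 _ => Fin 5
  | .T2 _ => Fin 5
  | .T3 _ => Fin 5

def fmul4 {m : ℕ} (i : Fin m) (o : Fin 4) : Fin (4 * m) :=
  ⟨4 * i.val + o.val, by have h1 := i.isLt; have h2 := o.isLt; omega⟩

def fmul3 {m : ℕ} (i : Fin m) (o : Fin 3) : Fin (3 * m) :=
  ⟨3 * i.val + o.val, by have h1 := i.isLt; have h2 := o.isLt; omega⟩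

/-- The union `U^σ_φ` for a cubic monotone 3-CNF `φ` given by its clauses
`X : Fin m → Fin 3 → V`.  For `b = false` this is `U^{σ1}_φ`, for `b = true`
it is `U^{σ2}_φ` (in which the events `v_{4i}` and `w_i` of `T_{i,0}` are exchanged). -/
def gadget {V : Type} [DecidableEq V] (m : ℕ) (X : Fin m → Fin 3 → V) (b : Bool) :
    Union (GIdx m) (GS m) (GEvent V m) := fun idx =>
  match idx with
  | .H j => chainTS 5
      [(.k, .both), (.mev, .both), (.v j, .both), (.k, .both), (.u (.H j), .both)]
  | .F0 => chainTS 8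
      [(.k, .both), (.mev, .both), (.q 0, .both), (.k, .both), (.mev, .both),
       (.q 1, .both), (.k, .both), (.u .F0, .both)]
  | .F1 => chainTS 5
      [(.k, .both), (.q 2, .both), (.q 3, .both), (.k, .both), (.u .F1, .both)]
  | .F2 => chainTS 9
      [(.k, .both), (.q 2, .both), (.q 0, .both), (.z, .both), (.q 1, .both),
       (.z, .both), (.q 3, .both), (.k, .both), (.u .F2, .both)]
  | .G j => chainTS 8
      [(.k, .both), (.y j, .both), (.z, .fwd), (.z, .both), (.y j, .both),
       (.w j, .both), (.k, .both), (.u (.G j), .both)]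
  | .D l => chainTS 8
      [(.k, .both), (.p l, .both), (.z, .fwd), (.z, .both), (.p l, .both),
       (.a l, .both), (.k, .both), (.u (.D l), .both)]
  | .T0 i => chainTS 17
      [(.k, .both),
       ((if b then .w i else .v (fmul4 i 0)), .both),
       (.a (fmul3 i 0), .both),
       (.x (X i 0), .both),
       (.x (X i 0), .bwd),
       (.a (fmul3 i 0), .both),
       (.a (fmul3 i 1), .both),
       (.x (X i 1), .both),
       (.x (X i 1), .bwd),
       (.a (fmul3 i 1), .both),
       (.a (fmul3 i 2), .both),
       (.x (X i 2), .both),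
       (.x (X i 2), .bwd),
       (.a (fmul3 i 2), .both),
       ((if b then .v (fmul4 i 0) else .w i), .both),
       (.k, .both),
       (.u (.T0 i), .both)]
  | .T1 i => chainTS 4
      [(.x (X i 0), .both), (.v (fmul4 i 1), .both), (.x (X i 1), .both),
       (.u (.T1 i), .both)]
  | .T2 i => chainTS 4
      [(.x (X i 0), .both), (.v (fmul4 i 2), .both), (.x (X i 2), .both),
       (.u (.T2 i), .both)]
  | .T3 i => chainTS 4
      [(.x (X i 1), .both), (.v (fmul4 i 3), .both), (.x (X i 2), .both),
       (.u (.T3 i), .both)]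

/-- `φ` is a cubic monotone 3-CNF: the three variables of every clause are
pairwise distinct, and every variable occurs in exactly three clauses. -/
def Cubic {V : Type} [Fintype V] [DecidableEq V] (m : ℕ) (X : Fin m → Fin 3 → V) : Prop :=
  (∀ i : Fin m, Function.Injective (X i)) ∧
  ∀ vv : V, (Finset.univ.filter (fun pr : Fin m × Fin 3 => X pr.1 pr.2 = vv)).card = 3

/-- `M` is a one-in-three model of `φ`: it contains exactly one variable of
every clause. -/
def OneInThree {V : Type} (m : ℕ) (X : Fin m → Fin 3 → V) (M : Set V) : Prop :=
  ∀ i : Fin m, ∃! r : Fin 3, X i r ∈ M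

def hidx {m : ℕ} (hm : 0 < m) : Fin (4 * m) := ⟨0, by omega⟩

/-- The state `h_{0,2}` of the gadget `H_0`. -/
def h02 {m : ℕ} (hm : 0 < m) : Σ i : GIdx m, GS m i := ⟨GIdx.H (hidx hm), (2 : Fin 6)⟩

/-! ### Chains of interactions -/

/-- `stepB (i, d) x y`: an edge of direction `d` whose event has interaction `i` is respected
when its left and right end have support `x` and `y`. -/
def stepB (p : Interaction × Dir) (x y : Bool) : Bool :=
  (!p.2.allowsFwd || p.1.apply x == some y) && (!p.2.allowsBwd || p.1.apply y == some x)

/-- `f` is a region support on the chain whose edges carry the interactions listed in `l`. -/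
def Realizes (l : List (Interaction × Dir)) (f : ℕ → Bool) : Prop :=
  ∀ t p, l[t]? = some p → stepB p (f t) (f (t + 1)) = true

/-- Search for a support on the chain `l` starting with value `x` whose value at each position
`t` satisfies the constraint `g t`. -/
def search : List (Interaction × Dir) → (ℕ → Bool → Bool) → Bool → Bool
  | [], g, x => g 0 x
  | p :: l, g, x => g 0 x &&
      ((stepB p x true && search l (fun t => g (t + 1)) true) ||
       (stepB p x false && search l (fun t => g (t + 1)) false))

/-- Existence of a support on the chain `l` obeying the constraint `g`, as a computation. -/
def searchB (l : List (Interaction × Dir)) (g : ℕ → Bool → Bool) : Bool :=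
  search l g true || search l g false

theorem realizes_cons {p : Interaction × Dir} {l : List (Interaction × Dir)} {f : ℕ → Bool}
    {x : Bool} (h0 : stepB p x (f 0) = true) (h : Realizes l f) :
    Realizes (p :: l) (fun t => Nat.casesOn t x f) := by
  intro t q hq
  cases t with
  | zero => simp at hq; subst hq; exact h0
  | succ t => exact h t q (by simpa using hq)

theorem search_sound (l : List (Interaction × Dir)) :
    ∀ (g : ℕ → Bool → Bool) (x : Bool), search l g x = true →
      ∃ f : ℕ → Bool, f 0 = x ∧ (∀ t ≤ l.length, g t (f t) = true) ∧ Realizes l f := by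
  induction l with
  | nil =>
    intro g x h
    refine ⟨fun _ => x, rfl, ?_, ?_⟩
    · intro t ht
      obtain rfl : t = 0 := by simpa using ht
      exact h
    · intro t p hp
      simp at hp
  | cons p l ih =>
    intro g x h
    simp only [search, Bool.and_eq_true, Bool.or_eq_true] at h
    obtain ⟨hg, h⟩ := h
    obtain ⟨y, hy, hs⟩ : ∃ y, stepB p x y = true ∧ search l (fun t => g (t + 1)) y = true := by
      rcases h with h | h
      exacts [⟨_, h⟩, ⟨_, h⟩]
    obtain ⟨f, hf0, hfg, hf⟩ := ih _ _ hs
    refine ⟨fun t => Nat.casesOn t x f, rfl, ?_, realizes_cons (by rw [hf0]; exact hy) hf⟩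
    intro t ht
    cases t with
    | zero => exact hg
    | succ t => exact hfg t (by simpa using ht)

theorem searchB_sound {l : List (Interaction × Dir)} {g : ℕ → Bool → Bool}
    (h : searchB l g = true) :
    ∃ f : ℕ → Bool, (∀ t ≤ l.length, g t (f t) = true) ∧ Realizes l f := by
  rcases (Bool.or_eq_true _ _).mp h with h | h <;>
  · obtain ⟨f, -, h⟩ := search_sound l g _ h
    exact ⟨f, h⟩

/-- No constraint at all. -/
def anyG : ℕ → Bool → Bool := fun _ _ => true

/-- The constraint that position `s` has value `1`. -/
def atG (s : ℕ) : ℕ → Bool → Bool := fun t y => !(t == s) || y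

/-- The constraint that position `s` has value `1` and position `s'` has value `0`. -/
def sepG (s s' : ℕ) : ℕ → Bool → Bool := fun t y => (!(t == s) || y) && (!(t == s') || !y)

theorem realizes_nop_swap (l : List (Interaction × Dir))
    (h : ∀ p ∈ l, p.1 = .nop ∨ p.1 = .swap) (x : Bool) : ∃ f, f 0 = x ∧ Realizes l f := by
  induction l generalizing x with
  | nil => exact ⟨fun _ => x, rfl, fun t p hp => by simp at hp⟩
  | cons p l ih =>
    have ih := ih (fun q hq => h q (List.mem_cons_of_mem _ hq))
    obtain ⟨i, d⟩ := p
    rcases h _ List.mem_cons_self with hp | hp <;> simp only at hp <;> subst hp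
    · obtain ⟨f, hf0, hf⟩ := ih x
      exact ⟨_, rfl, realizes_cons (by rw [hf0]; cases x <;> cases d <;> rfl) hf⟩
    · obtain ⟨f, hf0, hf⟩ := ih (!x)
      exact ⟨_, rfl, realizes_cons (by rw [hf0]; cases x <;> cases d <;> rfl) hf⟩

/-- Chains without cycles impose no condition on `nop` and `swap`, and a single `free` edge only
fixes the value at that edge. -/
theorem realizes_one_free (l : List (Interaction × Dir))
    (h : ∀ p ∈ l, p.1 = .nop ∨ p.1 = .swap ∨ p.1 = .free)
    (h1 : l.Pairwise fun p q => p.1 = .free → q.1 ≠ .free) : ∃ f, Realizes l f := by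
  induction l with
  | nil => exact ⟨fun _ => true, fun t p hp => by simp at hp⟩
  | cons p l ih =>
    rw [List.pairwise_cons] at h1
    have hl := fun q hq => h q (List.mem_cons_of_mem _ hq)
    have ih := ih hl h1.2
    obtain ⟨i, d⟩ := p
    rcases h _ List.mem_cons_self with hp | hp | hp <;> simp only at hp <;> subst hp
    · obtain ⟨f, hf⟩ := ih
      exact ⟨_, realizes_cons (x := f 0) (by cases f 0 <;> cases d <;> rfl) hf⟩
    · obtain ⟨f, hf⟩ := ih
      exact ⟨_, realizes_cons (x := !f 0) (by cases f 0 <;> cases d <;> rfl) hf⟩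
    · obtain ⟨f, hf0, hf⟩ := realizes_nop_swap l
        (fun q hq => (hl q hq).imp_right fun h' => h'.resolve_right (h1.1 q hq rfl)) false
      exact ⟨_, realizes_cons (x := false) (by rw [hf0]; cases d <;> rfl) hf⟩

theorem realizes_true (l : List (Interaction × Dir))
    (h : ∀ p ∈ l, p.1 = .nop ∨ p.1 = .set) : Realizes l (fun _ => true) := by
  rintro t ⟨i, d⟩ hp
  rcases h _ (List.mem_of_getElem? hp) with h | h <;> simp only at h <;> subst h <;>
    cases d <;> rfl

theorem realizes_false (l : List (Interaction × Dir))
    (h : ∀ p ∈ l, p.1 = .nop ∨ p.1 = .free) : Realizes l (fun _ => false) := by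
  rintro t ⟨i, d⟩ hp
  rcases h _ (List.mem_of_getElem? hp) with h | h <;> simp only at h <;> subst h <;>
    cases d <;> rfl

/-! ### Regions of the union from interactions of events -/

section

set_option linter.unusedSectionVars false

variable {V : Type} [DecidableEq V] {m : ℕ} (X : Fin m → Fin 3 → V)

/-- The labelled edges of each gadget, from left to right. -/
def spec : GIdx m → List (GEvent V m × Dir)
  | .H j =>
      [(.k, .both), (.mev, .both), (.v j, .both), (.k, .both), (.u (.H j), .both)]
  | .F0 =>
      [(.k, .both), (.mev, .both), (.q 0, .both), (.k, .both), (.mev, .both),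
       (.q 1, .both), (.k, .both), (.u .F0, .both)]
  | .F1 =>
      [(.k, .both), (.q 2, .both), (.q 3, .both), (.k, .both), (.u .F1, .both)]
  | .F2 =>
      [(.k, .both), (.q 2, .both), (.q 0, .both), (.z, .both), (.q 1, .both),
       (.z, .both), (.q 3, .both), (.k, .both), (.u .F2, .both)]
  | .G j =>
      [(.k, .both), (.y j, .both), (.z, .fwd), (.z, .both), (.y j, .both),
       (.w j, .both), (.k, .both), (.u (.G j), .both)]
  | .D l =>
      [(.k, .both), (.p l, .both), (.z, .fwd), (.z, .both), (.p l, .both),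
       (.a l, .both), (.k, .both), (.u (.D l), .both)]
  | .T0 i =>
      [(.k, .both), (.v (fmul4 i 0), .both),
       (.a (fmul3 i 0), .both), (.x (X i 0), .both), (.x (X i 0), .bwd), (.a (fmul3 i 0), .both),
       (.a (fmul3 i 1), .both), (.x (X i 1), .both), (.x (X i 1), .bwd), (.a (fmul3 i 1), .both),
       (.a (fmul3 i 2), .both), (.x (X i 2), .both), (.x (X i 2), .bwd), (.a (fmul3 i 2), .both),
       (.w i, .both), (.k, .both), (.u (.T0 i), .both)]
  | .T1 i =>
      [(.x (X i 0), .both), (.v (fmul4 i 1), .both), (.x (X i 1), .both), (.u (.T1 i), .both)]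
  | .T2 i =>
      [(.x (X i 0), .both), (.v (fmul4 i 2), .both), (.x (X i 2), .both), (.u (.T2 i), .both)]
  | .T3 i =>
      [(.x (X i 1), .both), (.v (fmul4 i 3), .both), (.x (X i 2), .both), (.u (.T3 i), .both)]

/-- The position of a state in its chain. -/
def pos : (idx : GIdx m) → GS m idx → ℕ
  | .H _, s => Fin.val (n := 6) s
  | .F0, s => Fin.val (n := 9) s
  | .F1, s => Fin.val (n := 6) s
  | .F2, s => Fin.val (n := 10) s
  | .G _, s => Fin.val (n := 9) s
  | .D _, s => Fin.val (n := 9) s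
  | .T0 _, s => Fin.val (n := 18) s
  | .T1 _, s => Fin.val (n := 5) s
  | .T2 _, s => Fin.val (n := 5) s
  | .T3 _, s => Fin.val (n := 5) s

theorem pos_injective (idx : GIdx m) : Function.Injective (pos idx) := by
  cases idx <;> exact Fin.val_injective

theorem pos_le (idx : GIdx m) (s : GS m idx) : pos idx s ≤ (spec X idx).length := by
  cases idx <;> exact Nat.le_of_lt_succ (Fin.is_lt _)

theorem chain_delta_some {E : Type} [DecidableEq E] {n : ℕ} {l : List (E × Dir)}
    {s s' : Fin (n + 1)} {e : E} (h : (chainTS n l).delta s e = some s') :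
    (∃ d : Dir, d.allowsFwd = true ∧ l[s.val]? = some (e, d) ∧ s'.val = s.val + 1) ∨
    (∃ d : Dir, d.allowsBwd = true ∧ l[s'.val]? = some (e, d) ∧ s.val = s'.val + 1) := by
  have key : ∀ t, chainDelta l s.val e = some t →
      (∃ d : Dir, d.allowsFwd = true ∧ l[s.val]? = some (e, d) ∧ t = s.val + 1) ∨
      (∃ d : Dir, d.allowsBwd = true ∧ l[t]? = some (e, d) ∧ s.val = t + 1) := by
    intro t ht
    unfold chainDelta at ht
    split_ifs at ht with h1 h2
    · left
      rcases ho : l[s.val]? with _ | ⟨e', d⟩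
      · simp [ho, echk] at h1
      · simp only [ho, echk, Bool.and_eq_true, decide_eq_true_eq, if_true] at h1
        exact ⟨d, h1.2, by rw [h1.1], by simpa using ht.symm⟩
    · right
      obtain ⟨h0, h2⟩ := h2
      have ht : s.val - 1 = t := by simpa using ht
      rw [ht] at h2
      rcases ho : l[t]? with _ | ⟨e', d⟩
      · simp [ho, echk] at h2
      · simp only [ho, echk, Bool.and_eq_true, decide_eq_true_eq] at h2
        exact ⟨d, by simpa using h2.2, by rw [h2.1], by omega⟩
  simp only [chainTS, Option.bind_eq_some_iff] at h
  obtain ⟨r, hr, hr'⟩ := h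
  split_ifs at hr' with hlt
  have : s' = ⟨r, hlt⟩ := by simpa using hr'.symm
  subst this
  exact key r hr

theorem chain_delta_none {E : Type} [DecidableEq E] {n : ℕ} {l : List (E × Dir)}
    (hn : l.length = n) {s : Fin (n + 1)} {e : E} (h : (chainTS n l).delta s e = none) :
    (∀ d, l[s.val]? = some (e, d) → d.allowsFwd = false) ∧
    (∀ d, s.val ≠ 0 → l[s.val - 1]? = some (e, d) → d.allowsBwd = false) := by
  have hs := s.isLt
  simp only [chainTS, Option.bind_eq_none_iff, chainDelta] at h
  constructor
  · intro d hd
    by_contra hc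
    have hlt : s.val < l.length := by
      by_contra hge
      rw [List.getElem?_eq_none (by omega)] at hd
      simp at hd
    have hc : d.allowsFwd = true := by simpa using hc
    have := h (s.val + 1) (by rw [if_pos (by simp [hd, echk, hc])])
    rw [dif_pos (by omega)] at this
    simp at this
  · intro d h0 hd
    by_contra hc
    have hc : d.allowsBwd = true := by simpa using hc
    by_cases h1 : echk l[s.val]? e true = true
    · have hlt : s.val < l.length := by
        by_contra hge
        rw [List.getElem?_eq_none (by omega)] at h1
        simp [echk] at h1
      have := h (s.val + 1) (by rw [if_pos h1])
      rw [dif_pos (by omega)] at this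
      simp at this
    · have := h (s.val - 1) (by rw [if_neg h1, if_pos ⟨h0, by simp [hd, echk, hc]⟩])
      rw [dif_pos (by omega)] at this
      simp at this

theorem delta_some {idx : GIdx m} {s s' : GS m idx} {e : GEvent V m}
    (h : (gadget m X false idx).delta s e = some s') :
    (∃ d : Dir, d.allowsFwd = true ∧ (spec X idx)[pos idx s]? = some (e, d) ∧
      pos idx s' = pos idx s + 1) ∨
    (∃ d : Dir, d.allowsBwd = true ∧ (spec X idx)[pos idx s']? = some (e, d) ∧
      pos idx s = pos idx s' + 1) := by
  cases idx <;> exact chain_delta_some h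

theorem delta_none {idx : GIdx m} {s : GS m idx} {e : GEvent V m}
    (h : (gadget m X false idx).delta s e = none) :
    (∀ d, (spec X idx)[pos idx s]? = some (e, d) → d.allowsFwd = false) ∧
    (∀ d, pos idx s ≠ 0 → (spec X idx)[pos idx s - 1]? = some (e, d) → d.allowsBwd = false) := by
  cases idx <;> exact chain_delta_none rfl h

/-- The chain of interactions that an assignment of interactions to events induces on a gadget. -/
def word (sg : GEvent V m → Interaction) (idx : GIdx m) : List (Interaction × Dir) :=
  (spec X idx).map fun p => (sg p.1, p.2)

/-- The assignment `sg` extends to a region of the union. -/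
def Extends (sg : GEvent V m → Interaction) : Prop :=
  (∀ e, sg e ∈ tau1) ∧ ∀ idx, ∃ f, Realizes (word X sg idx) f

/-- On a single gadget, the support can be chosen independently of the other gadgets. -/
theorem region_of_extends {sg : GEvent V m → Interaction} (h : Extends X sg) (idx : GIdx m)
    (f : ℕ → Bool) (hf : Realizes (word X sg idx) f) :
    ∃ R : URegion tau1 (gadget m X false), R.sig = sg ∧ ∀ s, R.sup ⟨idx, s⟩ = f (pos idx s) := by
  choose F hF using h.2
  have hF' : ∀ i, Realizes (word X sg i) (Function.update F idx f i) := by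
    intro i
    by_cases hi : i = idx
    · subst hi; simpa using hf
    · simpa [hi] using hF i
  refine ⟨⟨fun s => Function.update F idx f s.1 (pos s.1 s.2), sg, h.1, ?_⟩, rfl, by simp⟩
  intro i s e s' hd
  rcases delta_some X hd with ⟨d, hdir, hl, hp⟩ | ⟨d, hdir, hl, hp⟩
  · have := hF' i (pos i s) (sg e, d) (by simp [word, hl])
    simp only [stepB, hdir, Bool.and_eq_true, Bool.or_eq_true, Bool.not_true, Bool.false_eq_true,
      false_or, beq_iff_eq] at this
    simp only [hp, this.1]
  · have := hF' i (pos i s') (sg e, d) (by simp [word, hl])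
    simp only [stepB, hdir, Bool.and_eq_true, Bool.or_eq_true, Bool.not_true, Bool.false_eq_true,
      false_or, beq_iff_eq] at this
    simp only [hp, this.2]

open Classical in
/-- The assignment that is `free` on `F`, else `set` on `S`, else `swap` on `P`, else `nop`. -/
noncomputable def asg (F P S : Set (GEvent V m)) (e : GEvent V m) : Interaction :=
  if e ∈ F then .free else if e ∈ S then .set else if e ∈ P then .swap else .nop

theorem asg_mem (F P S : Set (GEvent V m)) (e : GEvent V m) : asg F P S e ∈ tau1 := by
  unfold asg tau1
  split_ifs <;> simp

theorem asg_eq_free {F P S : Set (GEvent V m)} {e : GEvent V m} :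
    asg F P S e = .free ↔ e ∈ F := by
  unfold asg
  split_ifs <;> simp_all

/-- Event `e` can be inhibited at every state of gadget `idx` where it does not occur. -/
def Inh (e : GEvent V m) (idx : GIdx m) : Prop :=
  ∀ s, (gadget m X false idx).delta s e = none →
    ∃ R : URegion tau1 (gadget m X false), (R.sig e).apply (R.sup ⟨idx, s⟩) = none

/-- The given edge exists, is `free`, and has a direction satisfying `b`. -/
def freeB (o : Option (Interaction × Dir)) (b : Dir → Bool) : Bool :=
  match o with
  | some (.free, d) => b d
  | _ => false

/-- A `free` event occurs at position `s` of the chain `l`. -/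
def occB (l : List (Interaction × Dir)) (s : ℕ) : Bool :=
  freeB l[s]? Dir.allowsFwd || (s != 0 && freeB l[s - 1]? Dir.allowsBwd)

/-- At each position (18 being the greatest number of states of a gadget), one of the chains `ls`
either has a `free` event occurring there or has a support that is `1` there. -/
def coverB (ls : List (List (Interaction × Dir))) : Bool :=
  (List.range 18).all fun s => ls.any fun l => occB l s || searchB l (atG s)

theorem pos_lt (idx : GIdx m) (s : GS m idx) : pos idx s < 18 := by
  cases idx <;> exact lt_of_lt_of_le (Fin.is_lt _) (by norm_num)

theorem not_occB {idx : GIdx m} {s : GS m idx} {e : GEvent V m}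
    (h : (gadget m X false idx).delta s e = none) (P S : Set (GEvent V m)) :
    occB (word X (asg {e} P S) idx) (pos idx s) = false := by
  obtain ⟨h1, h2⟩ := delta_none X h
  have key : ∀ (t : ℕ) (b : Dir → Bool), (∀ d, (spec X idx)[t]? = some (e, d) → b d = false) →
      freeB (word X (asg {e} P S) idx)[t]? b = false := by
    intro t b hb
    unfold freeB
    split
    · next d hd =>
      simp only [word, List.getElem?_map, Option.map_eq_some_iff, Prod.mk.injEq, Prod.exists] at hd
      obtain ⟨e', d', hl, he, rfl⟩ := hd
      obtain rfl : e' = e := by simpa using asg_eq_free.mp he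
      exact hb _ hl
    · rfl
  unfold occB
  rw [key _ Dir.allowsFwd h1, Bool.false_or]
  by_cases h0 : pos idx s = 0
  · simp [h0]
  · rw [key _ Dir.allowsBwd (fun d => h2 d h0), Bool.and_false]

theorem inh_of_cover {e : GEvent V m} {idx : GIdx m}
    (L : List (Set (GEvent V m) × Set (GEvent V m)))
    (hL : ∀ p ∈ L, Extends X (asg {e} p.1 p.2))
    (hc : coverB (L.map fun p => word X (asg {e} p.1 p.2) idx) = true) : Inh X e idx := by
  intro s hs
  have := List.all_eq_true.mp hc (pos idx s) (List.mem_range.mpr (pos_lt idx s))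
  simp only [List.any_map, List.any_eq_true, Function.comp_apply] at this
  obtain ⟨p, hp, hps⟩ := this
  rw [not_occB X hs, Bool.false_or] at hps
  obtain ⟨f, hfg, hf⟩ := searchB_sound hps
  obtain ⟨R, hR, hRs⟩ := region_of_extends X (hL p hp) idx f hf
  refine ⟨R, ?_⟩
  have h1 : f (pos idx s) = true := by
    simpa [atG] using hfg (pos idx s) (by simpa [word] using pos_le X idx s)
  have h2 : asg {e} p.1 p.2 e = .free := asg_eq_free.mpr rfl
  rw [hR, hRs, h1, h2]
  rfl

theorem inh_of_not_mem {e : GEvent V m} {idx : GIdx m} (h : ∀ p ∈ spec X idx, p.1 ≠ e) :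
    Inh X e idx := by
  intro s _
  have hE : Extends X (asg {e} ∅ ∅) := by
    refine ⟨asg_mem _ _ _, fun i => ⟨_, realizes_false _ ?_⟩⟩
    simp only [word, List.mem_map, forall_exists_index, and_imp, forall_apply_eq_imp_iff₂]
    intro p _
    by_cases hp : p.1 = e <;> simp [asg, hp]
  obtain ⟨R, hR, hRs⟩ := region_of_extends X hE idx (fun _ => true) (realizes_true _ (by
    simp only [word, List.mem_map, forall_exists_index, and_imp, forall_apply_eq_imp_iff₂]
    intro p hp
    simp [asg, h p hp]))
  refine ⟨R, ?_⟩
  have h2 : asg {e} ∅ ∅ e = .free := asg_eq_free.mpr rfl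
  rw [hR, hRs, h2]
  rfl

/-! ### Conditions under which an assignment extends -/

variable {X}

theorem realizes_of_searchB {l : List (Interaction × Dir)} (h : searchB l anyG = true) :
    ∃ f, Realizes l f :=
  (searchB_sound h).imp fun _ h => h.2

/-- No `set` event and at most one `free` edge in the gadget. -/
theorem realizes_of_sparse {idx : GIdx m} {e : GEvent V m} {P S : Set (GEvent V m)}
    (hS : ∀ p ∈ spec X idx, p.1 ∉ S)
    (h1 : (spec X idx).Pairwise fun p q => p.1 = e → q.1 ≠ e) :
    ∃ f, Realizes (word X (asg {e} P S) idx) f := by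
  apply realizes_one_free
  · simp only [word, List.mem_map, forall_exists_index, and_imp, forall_apply_eq_imp_iff₂]
    intro p hp
    have := hS p hp
    unfold asg
    split_ifs <;> simp
  · simpa only [word, List.pairwise_map, asg_eq_free, ne_eq, Set.mem_singleton_iff] using h1

/-- Only `nop` and `set` events in the gadget. -/
theorem realizes_of_nop_set {idx : GIdx m} {F P S : Set (GEvent V m)}
    (h : ∀ p ∈ spec X idx, p.1 ∉ F ∧ p.1 ∉ P) :
    ∃ f, Realizes (word X (asg F P S) idx) f := by
  refine ⟨_, realizes_true _ ?_⟩
  simp only [word, List.mem_map, forall_exists_index, and_imp, forall_apply_eq_imp_iff₂]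
  intro p hp
  have := h p hp
  unfold asg
  split_ifs <;> simp_all

/-- Only `nop` and `free` events in the gadget. -/
theorem realizes_of_nop_free {idx : GIdx m} {F P S : Set (GEvent V m)}
    (h : ∀ p ∈ spec X idx, p.1 ∉ P ∧ p.1 ∉ S) :
    ∃ f, Realizes (word X (asg F P S) idx) f := by
  refine ⟨_, realizes_false _ ?_⟩
  simp only [word, List.mem_map, forall_exists_index, and_imp, forall_apply_eq_imp_iff₂]
  intro p hp
  have := h p hp
  unfold asg
  split_ifs <;> simp_all

theorem extends_of_single {e : GEvent V m}
    (h : ∀ idx, (spec X idx).Pairwise fun p q => p.1 = e → q.1 ≠ e) (P : Set (GEvent V m)) :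
    Extends X (asg {e} P ∅) :=
  ⟨asg_mem _ _ _, fun idx => realizes_of_sparse (by simp) (h idx)⟩

@[simp] theorem fmul3_inj {i i' : Fin m} {r r' : Fin 3} :
    fmul3 i r = fmul3 i' r' ↔ i = i' ∧ r = r' := by
  simp only [fmul3, Fin.ext_iff]
  omega

@[simp] theorem fmul4_inj {i i' : Fin m} {r r' : Fin 4} :
    fmul4 i r = fmul4 i' r' ↔ i = i' ∧ r = r' := by
  simp only [fmul4, Fin.ext_iff]
  omega

theorem exists_fmul3 (l : Fin (3 * m)) : ∃ i r, l = fmul3 i r :=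
  ⟨⟨l.val / 3, by omega⟩, ⟨l.val % 3, by omega⟩, by simp only [fmul3, Fin.ext_iff]; omega⟩

/-! ### Inhibiting the events that label at most one edge of each gadget -/

theorem extends_q (r : Fin 4) (P : Set (GEvent V m)) : Extends X (asg {.q r} P ∅) := by
  apply extends_of_single
  intro idx
  cases idx <;> fin_cases r <;> simp [spec]

theorem extends_v (j : Fin (4 * m)) (P : Set (GEvent V m)) : Extends X (asg {.v j} P ∅) := by
  apply extends_of_single
  intro idx
  cases idx <;> simp [spec]

theorem extends_w (j : Fin m) (P : Set (GEvent V m)) : Extends X (asg {.w j} P ∅) := by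
  apply extends_of_single
  intro idx
  cases idx <;> simp [spec]

theorem extends_u (i : GIdx m) (P : Set (GEvent V m)) : Extends X (asg {.u i} P ∅) := by
  apply extends_of_single
  intro idx
  cases idx <;> simp [spec]

theorem inh_q (r : Fin 4) (idx : GIdx m) : Inh X (.q r) idx := by
  cases idx
  case F0 =>
    fin_cases r
    · exact inh_of_cover X [({.mev}, ∅), ({.k}, ∅), ({.q 1}, ∅), ({.u .F0}, ∅)]
        (by simp [extends_q]) (by simp [word, spec, asg]; decide)
    · exact inh_of_cover X [({.mev}, ∅), ({.q 0}, ∅), ({.k}, ∅)]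
        (by simp [extends_q]) (by simp [word, spec, asg]; decide)
    all_goals exact inh_of_not_mem X (by simp [spec])
  case F1 =>
    fin_cases r
    iterate 2 exact inh_of_not_mem X (by simp [spec])
    · exact inh_of_cover X [({.k}, ∅), ({.q 3}, ∅)]
        (by simp [extends_q]) (by simp [word, spec, asg]; decide)
    · exact inh_of_cover X [({.k}, ∅), ({.q 2}, ∅)]
        (by simp [extends_q]) (by simp [word, spec, asg]; decide)
  case F2 =>
    fin_cases r
    · exact inh_of_cover X [({.z}, ∅), ({.q 2}, ∅), ({.q 1}, ∅)]
        (by simp [extends_q]) (by simp [word, spec, asg]; decide)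
    · exact inh_of_cover X [({.z}, ∅), ({.q 0}, ∅), ({.q 3}, ∅)]
        (by simp [extends_q]) (by simp [word, spec, asg]; decide)
    · exact inh_of_cover X [({.k}, ∅), ({.q 0}, ∅)]
        (by simp [extends_q]) (by simp [word, spec, asg]; decide)
    · exact inh_of_cover X [({.k}, ∅), ({.z}, ∅), ({.q 1}, ∅)]
        (by simp [extends_q]) (by simp [word, spec, asg]; decide)
  all_goals exact inh_of_not_mem X (by simp [spec])

theorem inh_u (i idx : GIdx m) (hφ : ∀ i, Function.Injective (X i)) : Inh X (.u i) idx := by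
  by_cases h : i = idx
  swap
  · exact inh_of_not_mem X (by cases idx <;> simpa [spec, eq_comm] using h)
  subst h
  have hX : ∀ i r r', X i r = X i r' ↔ r = r' := fun i r r' => (hφ i).eq_iff
  cases i
  case H j =>
    exact inh_of_cover X [({.k}, ∅), ({.v j}, ∅)]
      (by simp [extends_u]) (by simp [word, spec, asg]; decide)
  case F0 =>
    exact inh_of_cover X [({.k}, ∅), ({.q 1}, ∅)]
      (by simp [extends_u]) (by simp [word, spec, asg]; decide)
  case F1 =>
    exact inh_of_cover X [({.k}, ∅), ({.q 3}, ∅)]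
      (by simp [extends_u]) (by simp [word, spec, asg]; decide)
  case F2 =>
    exact inh_of_cover X [({.k}, ∅), ({.q 3}, ∅)]
      (by simp [extends_u]) (by simp [word, spec, asg]; decide)
  case G j =>
    exact inh_of_cover X [({.k}, ∅), ({.w j}, ∅)]
      (by simp [extends_u]) (by simp [word, spec, asg]; decide)
  case D l =>
    exact inh_of_cover X [({.k}, ∅), ({.a l}, ∅)]
      (by simp [extends_u]) (by simp [word, spec, asg]; decide)
  case T0 j =>
    exact inh_of_cover X [({.k}, ∅), ({.w j}, ∅)]
      (by simp [extends_u]) (by simp [word, spec, asg]; decide)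
  case T1 j =>
    exact inh_of_cover X [({.x (X j 1)}, ∅)]
      (by simp [extends_u]) (by simp [word, spec, asg, hX]; decide)
  case T2 j =>
    exact inh_of_cover X [({.x (X j 2)}, ∅)]
      (by simp [extends_u]) (by simp [word, spec, asg, hX]; decide)
  case T3 j =>
    exact inh_of_cover X [({.x (X j 2)}, ∅)]
      (by simp [extends_u]) (by simp [word, spec, asg, hX]; decide)

/-- Between the two edges of `a (fmul3 i 0)` in `T0 i`, every event occurs twice, so that `nop` and
`swap` cannot tell apart the states outside of them. With `X i 0` being `set`, its one-way edge
lowers the support and the two swaps give `0` to the left and `1` to the right. -/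
theorem extends_v_set (i : Fin m) (hφ : ∀ i, Function.Injective (X i)) :
    Extends X (asg {.v (fmul4 i 0)} {.a (fmul3 i 0)} {.x (X i 0)}) := by
  have hX : ∀ i r r', X i r = X i r' ↔ r = r' := fun i r r' => (hφ i).eq_iff
  refine ⟨asg_mem _ _ _, fun idx => ?_⟩
  cases idx
  case T0 i' =>
    by_cases h : i' = i
    · subst h
      exact realizes_of_searchB (by simp [word, spec, asg, hX]; decide)
    · exact realizes_of_nop_set (by simp [spec, h])
  case T1 i' => exact realizes_of_nop_set (by simp [spec])
  case T2 i' => exact realizes_of_nop_set (by simp [spec])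
  case T3 i' => exact realizes_of_nop_set (by simp [spec])
  all_goals exact realizes_of_sparse (by simp [spec]) (by simp [spec])

theorem inh_v (j : Fin (4 * m)) (idx : GIdx m) (hφ : ∀ i, Function.Injective (X i)) :
    Inh X (.v j) idx := by
  have hX : ∀ i r r', X i r = X i r' ↔ r = r' := fun i r r' => (hφ i).eq_iff
  cases idx
  case H j' =>
    by_cases h : j' = j
    · subst h
      exact inh_of_cover X [({.mev}, ∅), ({.k}, ∅), ({.u (.H j')}, ∅)]
        (by simp [extends_v]) (by simp [word, spec, asg]; decide)
    · exact inh_of_not_mem X (by simp [spec, h])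
  case T0 i =>
    by_cases h : fmul4 i 0 = j
    · subst h
      exact inh_of_cover X [({.k}, ∅), ({.a (fmul3 i 0)}, ∅),
        ({.a (fmul3 i 0)}, {.x (X i 0)})]
        (by simp [extends_v, extends_v_set i hφ]) (by simp [word, spec, asg, hX]; decide)
    · exact inh_of_not_mem X (by simp [spec, h])
  case T1 i =>
    by_cases h : fmul4 i 1 = j
    · subst h
      exact inh_of_cover X [({.x (X i 0)}, ∅), ({.x (X i 1)}, ∅)]
        (by simp [extends_v]) (by simp [word, spec, asg, hX]; decide)
    · exact inh_of_not_mem X (by simp [spec, h])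
  case T2 i =>
    by_cases h : fmul4 i 2 = j
    · subst h
      exact inh_of_cover X [({.x (X i 0)}, ∅), ({.x (X i 2)}, ∅)]
        (by simp [extends_v]) (by simp [word, spec, asg, hX]; decide)
    · exact inh_of_not_mem X (by simp [spec, h])
  case T3 i =>
    by_cases h : fmul4 i 3 = j
    · subst h
      exact inh_of_cover X [({.x (X i 1)}, ∅), ({.x (X i 2)}, ∅)]
        (by simp [extends_v]) (by simp [word, spec, asg, hX]; decide)
    · exact inh_of_not_mem X (by simp [spec, h])
  all_goals exact inh_of_not_mem X (by simp [spec])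

theorem extends_w_set_z (j : Fin m) : Extends X (asg {.w j} {.y j} {.z}) := by
  refine ⟨asg_mem _ _ _, fun idx => ?_⟩
  cases idx
  case G j' =>
    by_cases h : j' = j
    · subst h
      exact realizes_of_searchB (by simp [word, spec, asg]; decide)
    · exact realizes_of_nop_set (by simp [spec, h])
  case F2 => exact realizes_of_nop_set (by simp [spec])
  case D l => exact realizes_of_nop_set (by simp [spec])
  all_goals exact realizes_of_sparse (by simp [spec]) (by simp [spec])

theorem extends_w_set_x (j : Fin m) (hφ : ∀ i, Function.Injective (X i)) :
    Extends X (asg {.w j} ∅ {.x (X j 2)}) := by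
  have hX : ∀ i r r', X i r = X i r' ↔ r = r' := fun i r r' => (hφ i).eq_iff
  refine ⟨asg_mem _ _ _, fun idx => ?_⟩
  cases idx
  case T0 j' =>
    by_cases h : j' = j
    · subst h
      exact realizes_of_searchB (by simp [word, spec, asg, hX]; decide)
    · exact realizes_of_nop_set (by simp [spec, h])
  case G j' => exact realizes_of_sparse (by simp [spec]) (by simp [spec])
  all_goals exact realizes_of_nop_set (by simp [spec])

theorem inh_w (j : Fin m) (idx : GIdx m) (hφ : ∀ i, Function.Injective (X i)) :
    Inh X (.w j) idx := by
  have hX : ∀ i r r', X i r = X i r' ↔ r = r' := fun i r r' => (hφ i).eq_iff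
  cases idx
  case G j' =>
    by_cases h : j' = j
    · subst h
      exact inh_of_cover X [({.k}, ∅), ({.y j'}, ∅), ({.u (.G j')}, ∅), ({.y j'}, {.z})]
        (by simp [extends_w, extends_w_set_z]) (by simp [word, spec, asg]; decide)
    · exact inh_of_not_mem X (by simp [spec, h])
  case T0 j' =>
    by_cases h : j' = j
    · subst h
      exact inh_of_cover X [({.k}, ∅), ({.a (fmul3 j' 2)}, ∅), (∅, {.x (X j' 2)})]
        (by simp [extends_w, extends_w_set_x j' hφ]) (by simp [word, spec, asg, hX]; decide)
    · exact inh_of_not_mem X (by simp [spec, h])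
  all_goals exact inh_of_not_mem X (by simp [spec])

/-! ### Inhibiting `m`, `z`, `y`, `p`, `a` and the variable events -/

theorem extends_m {P : Set (GEvent V m)}
    (h : searchB (word X (asg {.mev} P ∅) .F0) anyG = true) : Extends X (asg {.mev} P ∅) := by
  refine ⟨asg_mem _ _ _, fun idx => ?_⟩
  cases idx
  case F0 => exact realizes_of_searchB h
  all_goals exact realizes_of_sparse (by simp) (by simp [spec])

theorem inh_m (idx : GIdx m) : Inh X .mev idx := by
  have h0 : Extends X (asg {.mev} {.k, .q 0} ∅) :=
    extends_m (by simp [word, spec, asg]; decide)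
  cases idx
  case H j =>
    have h1 : Extends X (asg {.mev} {.v j} ∅) := extends_m (by simp [word, spec, asg]; decide)
    exact inh_of_cover X [({.k, .q 0}, ∅), ({.v j}, ∅)] (by simp [h0, h1])
      (by simp [word, spec, asg]; decide)
  case F0 =>
    have h1 : Extends X (asg {.mev} {.q 1} ∅) := extends_m (by simp [word, spec, asg]; decide)
    exact inh_of_cover X [({.k, .q 0}, ∅), ({.q 1}, ∅)] (by simp [h0, h1])
      (by simp [word, spec, asg]; decide)
  all_goals exact inh_of_not_mem X (by simp [spec])

/-- The `swap` events of a region in which `z` is inhibited at all states where it does not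
occur. -/
def swapZ : Set (GEvent V m) :=
  {e | match e with
    | .q r => r = 0 ∨ r = 3
    | .y _ => True
    | .p _ => True
    | _ => False}

theorem inh_z (idx : GIdx m) : Inh X .z idx := by
  have h0 : Extends X (asg {.z} swapZ ∅) := by
    refine ⟨asg_mem _ _ _, fun idx => ?_⟩
    cases idx
    case F2 => exact realizes_of_searchB (by simp [word, spec, asg, swapZ]; decide)
    case G => exact realizes_of_searchB (by simp [word, spec, asg, swapZ]; decide)
    case D => exact realizes_of_searchB (by simp [word, spec, asg, swapZ]; decide)
    all_goals exact realizes_of_sparse (by simp) (by simp [spec])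
  cases idx
  case F2 => exact inh_of_cover X [(swapZ, ∅)] (by simp [h0])
              (by simp [word, spec, asg, swapZ]; decide)
  case G => exact inh_of_cover X [(swapZ, ∅)] (by simp [h0])
              (by simp [word, spec, asg, swapZ]; decide)
  case D => exact inh_of_cover X [(swapZ, ∅)] (by simp [h0])
              (by simp [word, spec, asg, swapZ]; decide)
  all_goals exact inh_of_not_mem X (by simp [spec])

theorem extends_y {j : Fin m} {P : Set (GEvent V m)}
    (h : searchB (word X (asg {.y j} P ∅) (.G j)) anyG = true) : Extends X (asg {.y j} P ∅) := by
  refine ⟨asg_mem _ _ _, fun idx => ?_⟩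
  cases idx
  case G j' =>
    by_cases hj : j' = j
    · subst hj; exact realizes_of_searchB h
    · exact realizes_of_sparse (by simp) (by simp [spec, hj])
  all_goals exact realizes_of_sparse (by simp) (by simp [spec])

theorem inh_y (j : Fin m) (idx : GIdx m) : Inh X (.y j) idx := by
  cases idx
  case G j' =>
    by_cases hj : j' = j
    · subst hj
      have h0 : Extends X (asg {.y j'} {.k, .z} ∅) :=
        extends_y (by simp [word, spec, asg]; decide)
      have h1 : Extends X (asg {.y j'} {.w j'} ∅) :=
        extends_y (by simp [word, spec, asg]; decide)
      exact inh_of_cover X [({.k, .z}, ∅), ({.w j'}, ∅)] (by simp [h0, h1])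
        (by simp [word, spec, asg]; decide)
    · exact inh_of_not_mem X (by simp [spec, hj])
  all_goals exact inh_of_not_mem X (by simp [spec])

theorem extends_p {l : Fin (3 * m)} {P : Set (GEvent V m)}
    (h : searchB (word X (asg {.p l} P ∅) (.D l)) anyG = true) : Extends X (asg {.p l} P ∅) := by
  refine ⟨asg_mem _ _ _, fun idx => ?_⟩
  cases idx
  case D l' =>
    by_cases hl : l' = l
    · subst hl; exact realizes_of_searchB h
    · exact realizes_of_sparse (by simp) (by simp [spec, hl])
  all_goals exact realizes_of_sparse (by simp) (by simp [spec])

theorem inh_p (l : Fin (3 * m)) (idx : GIdx m) : Inh X (.p l) idx := by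
  cases idx
  case D l' =>
    by_cases hl : l' = l
    · subst hl
      have h0 : Extends X (asg {.p l'} {.k, .z} ∅) :=
        extends_p (by simp [word, spec, asg]; decide)
      have h1 : Extends X (asg {.p l'} {.a l'} ∅) :=
        extends_p (by simp [word, spec, asg]; decide)
      exact inh_of_cover X [({.k, .z}, ∅), ({.a l'}, ∅)] (by simp [h0, h1])
        (by simp [word, spec, asg]; decide)
    · exact inh_of_not_mem X (by simp [spec, hl])
  all_goals exact inh_of_not_mem X (by simp [spec])

theorem extends_a {i : Fin m} {r : Fin 3} {P : Set (GEvent V m)}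
    (h : searchB (word X (asg {.a (fmul3 i r)} P ∅) (.T0 i)) anyG = true) :
    Extends X (asg {.a (fmul3 i r)} P ∅) := by
  refine ⟨asg_mem _ _ _, fun idx => ?_⟩
  cases idx
  case T0 i' =>
    by_cases hi : i' = i
    · subst hi; exact realizes_of_searchB h
    · exact realizes_of_sparse (by simp) (by simp [spec, hi])
  all_goals exact realizes_of_sparse (by simp) (by simp [spec])

theorem extends_a_set_z (l : Fin (3 * m)) : Extends X (asg {.a l} {.p l} {.z}) := by
  obtain ⟨i, r, rfl⟩ := exists_fmul3 l
  refine ⟨asg_mem _ _ _, fun idx => ?_⟩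
  cases idx
  case D l' =>
    by_cases h : l' = fmul3 i r
    · subst h
      exact realizes_of_searchB (by simp [word, spec, asg]; decide)
    · exact realizes_of_nop_set (by simp [spec, h])
  case F2 => exact realizes_of_nop_set (by simp [spec])
  case G l => exact realizes_of_nop_set (by simp [spec])
  case T0 i' => exact realizes_of_nop_free (by simp [spec])
  all_goals exact realizes_of_sparse (by simp [spec]) (by simp [spec])

/-- If only `X i r'` is `set` and at most `a (fmul3 i r')` is `swap`, then `T0 i` is the only gadget
with a condition to check. -/
theorem extends_a_set_x {i : Fin m} {r r' : Fin 3} {P : Set (GEvent V m)}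
    (hP : P ⊆ {.a (fmul3 i r')})
    (h : searchB (word X (asg {.a (fmul3 i r)} P {.x (X i r')}) (.T0 i)) anyG = true) :
    Extends X (asg {.a (fmul3 i r)} P {.x (X i r')}) := by
  have hP' : ∀ e, e ≠ .a (fmul3 i r') → e ∉ P := fun e he h => he (hP h)
  refine ⟨asg_mem _ _ _, fun idx => ?_⟩
  cases idx
  case T0 i' =>
    by_cases hi : i' = i
    · subst hi; exact realizes_of_searchB h
    · exact realizes_of_nop_set (by simp [spec, hi, hP'])
  case D l => exact realizes_of_sparse (by simp [spec]) (by simp [spec])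
  all_goals exact realizes_of_nop_set (by simp [spec, hP'])

theorem inh_a (l : Fin (3 * m)) (idx : GIdx m) (hφ : ∀ i, Function.Injective (X i)) :
    Inh X (.a l) idx := by
  have hX : ∀ i r r', X i r = X i r' ↔ r = r' := fun i r r' => (hφ i).eq_iff
  obtain ⟨i, r, rfl⟩ := exists_fmul3 l
  cases idx
  case D l' =>
    by_cases hl : l' = fmul3 i r
    · subst hl
      have h0 : Extends X (asg {.a (fmul3 i r)} {.k} ∅) :=
        extends_a (by fin_cases r <;> simp [word, spec, asg] <;> decide)
      have h1 : Extends X (asg {.a (fmul3 i r)} {.p (fmul3 i r)} ∅) :=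
        extends_a (by fin_cases r <;> simp [word, spec, asg] <;> decide)
      have h2 : Extends X (asg {.a (fmul3 i r)} {.u (.D (fmul3 i r))} ∅) :=
        extends_a (by fin_cases r <;> simp [word, spec, asg] <;> decide)
      exact inh_of_cover X [({.k}, ∅), ({.p (fmul3 i r)}, ∅), ({.u (.D (fmul3 i r))}, ∅),
          ({.p (fmul3 i r)}, {.z})]
        (by simp [h0, h1, h2, extends_a_set_z]) (by simp [word, spec, asg]; decide)
    · exact inh_of_not_mem X (by simp [spec, hl])
  case T0 i' =>
    by_cases hi : i' = i
    · subst hi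
      have hx : Extends X (asg {.a (fmul3 i' r)} {.x (X i' r)} ∅) :=
        extends_a (by fin_cases r <;> simp [word, spec, asg, hX] <;> decide)
      have hv : Extends X (asg {.a (fmul3 i' r)} {.v (fmul4 i' 0)} ∅) :=
        extends_a (by fin_cases r <;> simp [word, spec, asg] <;> decide)
      have hw : Extends X (asg {.a (fmul3 i' r)} {.w i'} ∅) :=
        extends_a (by fin_cases r <;> simp [word, spec, asg] <;> decide)
      have ha : ∀ r' ≠ r, Extends X (asg {.a (fmul3 i' r)} {.a (fmul3 i' r')} ∅) := by
        intro r' hr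
        exact extends_a
          (by fin_cases r <;> fin_cases r' <;> simp [word, spec, asg] at hr ⊢ <;> decide)
      fin_cases r
      · have h1 : Extends X (asg {.a (fmul3 i' 0)} {.a (fmul3 i' 1)} {.x (X i' 1)}) :=
          extends_a_set_x subset_rfl (by simp [word, spec, asg, hX]; decide)
        exact inh_of_cover X [({.x (X i' 0)}, ∅), ({.v (fmul4 i' 0)}, ∅),
            ({.a (fmul3 i' 1)}, ∅), ({.a (fmul3 i' 1)}, {.x (X i' 1)})]
          (by simpa [h1] using ⟨hx, hv, ha 1 (by decide)⟩)
          (by simp [word, spec, asg, hX]; decide)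
      · have h0 : Extends X (asg {.a (fmul3 i' 1)} ∅ {.x (X i' 0)}) :=
          extends_a_set_x (Set.empty_subset _) (by simp [word, spec, asg, hX]; decide)
        have h2 : Extends X (asg {.a (fmul3 i' 1)} {.a (fmul3 i' 2)} {.x (X i' 2)}) :=
          extends_a_set_x subset_rfl (by simp [word, spec, asg, hX]; decide)
        exact inh_of_cover X [({.x (X i' 1)}, ∅), ({.a (fmul3 i' 0)}, ∅),
            ({.a (fmul3 i' 2)}, ∅), (∅, {.x (X i' 0)}), ({.a (fmul3 i' 2)}, {.x (X i' 2)})]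
          (by simpa [h0, h2] using ⟨hx, ha 0 (by decide), ha 2 (by decide)⟩)
          (by simp [word, spec, asg, hX]; decide)
      · have h1 : Extends X (asg {.a (fmul3 i' 2)} ∅ {.x (X i' 1)}) :=
          extends_a_set_x (Set.empty_subset _) (by simp [word, spec, asg, hX]; decide)
        exact inh_of_cover X [({.x (X i' 2)}, ∅), ({.w i'}, ∅),
            ({.a (fmul3 i' 1)}, ∅), (∅, {.x (X i' 1)})]
          (by simpa [h1] using ⟨hx, hw, ha 1 (by decide)⟩)
          (by simp [word, spec, asg, hX]; decide)
    · exact inh_of_not_mem X (by simp [spec, hi])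
  all_goals exact inh_of_not_mem X (by simp [spec])

/-- The variable at the `l`-th position of the formula. -/
def varAt (X : Fin m → Fin 3 → V) (l : Fin (3 * m)) : V :=
  X ⟨l.val / 3, by omega⟩ ⟨l.val % 3, by omega⟩

@[simp] theorem varAt_fmul3 (i : Fin m) (r : Fin 3) : varAt X (fmul3 i r) = X i r := by
  unfold varAt fmul3
  congr 2
  · simp only; omega
  · simp only; omega

@[simp] theorem fmul4_mod (i : Fin m) (r : Fin 4) : (fmul4 i r).val % 4 = r.val := by
  simp only [fmul4]; omega

/-- The `swap` events of the regions that inhibit the variable event `x`: the accordance events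
next to `x`, the events `v` of the gadgets `T1`, `T2`, `T3`, and, if `b` holds, the fresh
events. -/
def swapX (X : Fin m → Fin 3 → V) (x : V) (b : Prop) : Set (GEvent V m) :=
  {e | match e with
    | .a l => varAt X l = x
    | .v j => j.val % 4 ≠ 0
    | .u _ => b
    | _ => False}

theorem extends_x (x : V) (b : Prop) (hφ : ∀ i, Function.Injective (X i)) :
    Extends X (asg {.x x} (swapX X x b) ∅) := by
  have hX : ∀ i r r', X i r = X i r' ↔ r = r' := fun i r r' => (hφ i).eq_iff
  have hne : ∀ i r r', r ≠ r' → X i r = x → X i r' ≠ x := by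
    rintro i r r' h rfl h'
    exact h ((hX i r r').mp h'.symm)
  refine ⟨asg_mem _ _ _, fun idx => ?_⟩
  cases idx
  case T0 i =>
    by_cases h0 : X i 0 = x
    · subst h0
      by_cases hb : b <;>
      exact realizes_of_searchB (by simp [word, spec, asg, swapX, hX, hb]; decide)
    by_cases h1 : X i 1 = x
    · subst h1
      by_cases hb : b <;>
      exact realizes_of_searchB (by simp [word, spec, asg, swapX, hX, hb]; decide)
    by_cases h2 : X i 2 = x
    · subst h2
      by_cases hb : b <;>
      exact realizes_of_searchB (by simp [word, spec, asg, swapX, hX, hb]; decide)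
    exact realizes_of_sparse (by simp) (by simp [spec, h0, h1, h2])
  case T1 i => exact realizes_of_sparse (by simp) (by simpa [spec] using hne i 0 1 (by decide))
  case T2 i => exact realizes_of_sparse (by simp) (by simpa [spec] using hne i 0 2 (by decide))
  case T3 i => exact realizes_of_sparse (by simp) (by simpa [spec] using hne i 1 2 (by decide))
  all_goals exact realizes_of_sparse (by simp) (by simp [spec])

theorem inh_x (x : V) (idx : GIdx m) (hφ : ∀ i, Function.Injective (X i)) :
    Inh X (.x x) idx := by
  have hX : ∀ i r r', X i r = X i r' ↔ r = r' := fun i r r' => (hφ i).eq_iff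
  by_cases hx : ∀ p ∈ spec X idx, p.1 ≠ .x x
  · exact inh_of_not_mem X hx
  apply inh_of_cover X [(swapX X x False, ∅), (swapX X x True, ∅)] (by simp [extends_x x _ hφ])
  cases idx
  case T0 i =>
    have : X i 0 = x ∨ X i 1 = x ∨ X i 2 = x := by
      by_contra hc
      push Not at hc
      exact hx (by simp [spec, hc])
    rcases this with rfl | rfl | rfl <;> simp [word, spec, asg, swapX, hX] <;> decide
  case T1 i =>
    have : X i 0 = x ∨ X i 1 = x := by
      by_contra hc
      push Not at hc
      exact hx (by simp [spec, hc])
    rcases this with rfl | rfl <;> simp [word, spec, asg, swapX, hX] <;> decide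
  case T2 i =>
    have : X i 0 = x ∨ X i 2 = x := by
      by_contra hc
      push Not at hc
      exact hx (by simp [spec, hc])
    rcases this with rfl | rfl <;> simp [word, spec, asg, swapX, hX] <;> decide
  case T3 i =>
    have : X i 1 = x ∨ X i 2 = x := by
      by_contra hc
      push Not at hc
      exact hx (by simp [spec, hc])
    rcases this with rfl | rfl <;> simp [word, spec, asg, swapX, hX] <;> decide
  all_goals exact absurd (by simp [spec]) hx

/-! ### Inhibiting `k` -/

/-- The `swap` events of the region that encodes a one-in-three model. -/
def swapM : Set (GEvent V m) :=
  {e | match e with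
    | .mev => True
    | .q r => r = 0 ∨ r = 1
    | .v _ => True
    | _ => False}

/-- The `set` events of the region that encodes a one-in-three model. -/
def setM (M : Set V) : Set (GEvent V m) :=
  {e | match e with
    | .x x => x ∈ M
    | _ => False}

/-- In `T0 i` the event `v` raises the support from `0` to `1`, and it has to be `0` again at `w`.
Exactly one of the three variable events of the clause is `set`, and this one resets the support
when traversed against its one-way edge. -/
theorem extends_k_model {M : Set V} (hM : OneInThree m X M) :
    Extends X (asg {.k} swapM (setM M)) := by
  refine ⟨asg_mem _ _ _, fun idx => ?_⟩
  have hcl : ∀ i, (X i 0 ∈ M ∧ X i 1 ∉ M ∧ X i 2 ∉ M) ∨ (X i 0 ∉ M ∧ X i 1 ∈ M ∧ X i 2 ∉ M) ∨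
      (X i 0 ∉ M ∧ X i 1 ∉ M ∧ X i 2 ∈ M) := by
    intro i
    obtain ⟨r, hr, hu⟩ := hM i
    have hne : ∀ r', r' ≠ r → X i r' ∉ M := fun r' h h' => h (hu r' h')
    fin_cases r
    · exact .inl ⟨hr, hne 1 (by decide), hne 2 (by decide)⟩
    · exact .inr (.inl ⟨hne 0 (by decide), hr, hne 2 (by decide)⟩)
    · exact .inr (.inr ⟨hne 0 (by decide), hne 1 (by decide), hr⟩)
  apply realizes_of_searchB
  cases idx
  case T0 i =>
    rcases hcl i with ⟨h0, h1, h2⟩ | ⟨h0, h1, h2⟩ | ⟨h0, h1, h2⟩ <;>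
      simp [word, spec, asg, swapM, setM, h0, h1, h2] <;> decide
  case T1 i =>
    rcases hcl i with ⟨h0, h1, h2⟩ | ⟨h0, h1, h2⟩ | ⟨h0, h1, h2⟩ <;>
      simp [word, spec, asg, swapM, setM, h0, h1] <;> decide
  case T2 i =>
    rcases hcl i with ⟨h0, h1, h2⟩ | ⟨h0, h1, h2⟩ | ⟨h0, h1, h2⟩ <;>
      simp [word, spec, asg, swapM, setM, h0, h2] <;> decide
  case T3 i =>
    rcases hcl i with ⟨h0, h1, h2⟩ | ⟨h0, h1, h2⟩ | ⟨h0, h1, h2⟩ <;>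
      simp [word, spec, asg, swapM, setM, h1, h2] <;> decide
  all_goals
    simp [word, spec, asg, swapM, setM]
    decide

/-- The `swap` events of a region in which `z` and the variable event `x` are `set`: `q 2` and
`q 3`, the accordance events `a` next to `x`, the events `w j` for `j ∈ J`, and those `p` and `y`
that do not share a gadget with one of the former. -/
def swapK (X : Fin m → Fin 3 → V) (x : V) (J : Set (Fin m)) : Set (GEvent V m) :=
  {e | match e with
    | .q r => r = 2 ∨ r = 3
    | .a l => varAt X l = x
    | .p l => varAt X l ≠ x
    | .y j => j ∉ J
    | .w j => j ∈ J
    | _ => False}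

/-- With `z` being `set`, a gadget `G` or `D` whose middle event (`y` or `p`) is `nop` reaches
the event `w` or `a` with support `1`, so that this event may be `swap`. In `T0 i`, the two
accordance events enclosing `x` bound a block of `1`s if `i ∉ J`; if `i ∈ J`, the one-way edge of
`x` moreover lowers the support, and the swapping pair leaves `1` from its second edge up to `w i`. -/
theorem extends_k_var (x : V) (J : Set (Fin m)) (hJ : ∀ j ∈ J, ∃ r, X j r = x)
    (hφ : ∀ i, Function.Injective (X i)) :
    Extends X (asg {.k} (swapK X x J) {.z, .x x}) := by
  have hX : ∀ i r r', X i r = X i r' ↔ r = r' := fun i r r' => (hφ i).eq_iff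
  refine ⟨asg_mem _ _ _, fun idx => ?_⟩
  cases idx
  case G j =>
    by_cases hj : j ∈ J <;>
    exact realizes_of_searchB (by simp [word, spec, asg, swapK, hj]; decide)
  case D l =>
    by_cases hl : varAt X l = x <;>
    exact realizes_of_searchB (by simp [word, spec, asg, swapK, hl]; decide)
  case T0 i =>
    by_cases hx : ∃ r, X i r = x
    · obtain ⟨r, rfl⟩ := hx
      by_cases hi : i ∈ J <;> fin_cases r <;>
      exact realizes_of_searchB (by simp [word, spec, asg, swapK, hi, hX]; decide)
    · have hi : i ∉ J := fun hi => hx (hJ i hi)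
      push Not at hx
      exact realizes_of_nop_free (by simp [spec, swapK, hx, hi])
  case T1 i => exact realizes_of_nop_set (by simp [spec, swapK])
  case T2 i => exact realizes_of_nop_set (by simp [spec, swapK])
  case T3 i => exact realizes_of_nop_set (by simp [spec, swapK])
  all_goals exact realizes_of_searchB (by simp [word, spec, asg, swapK]; decide)

theorem extends_k_fresh (i : GIdx m) : Extends X (asg {.k} {.u i} ∅) := by
  refine ⟨asg_mem _ _ _, fun idx => ?_⟩
  by_cases h : idx = i
  · subst h
    cases idx <;> exact realizes_of_searchB (by simp [word, spec, asg]; decide)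
  · exact realizes_of_nop_free (by cases idx <;> simp [spec, h])

theorem inh_k (hm : 0 < m) {M : Set V} (hM : OneInThree m X M)
    (hφ : ∀ i, Function.Injective (X i)) (idx : GIdx m) : Inh X .k idx := by
  have hX : ∀ i r r', X i r = X i r' ↔ r = r' := fun i r r' => (hφ i).eq_iff
  have hfresh := extends_k_fresh (X := X) idx
  have hmodel := extends_k_model hM
  have hvar : ∀ x, Extends X (asg {.k} (swapK X x ∅) {.z, .x x}) :=
    fun x => extends_k_var x ∅ (by simp) hφ
  have hvarw : ∀ i r, Extends X (asg {.k} (swapK X (X i r) {i}) {.z, .x (X i r)}) :=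
    fun i r => extends_k_var (X i r) {i} (by simp) hφ
  cases idx
  case H j =>
    exact inh_of_cover X [({.u (.H j)}, ∅), (swapM, setM M)] (by simp [hfresh, hmodel])
      (by simp [word, spec, asg, swapM, setM]; decide)
  case F0 =>
    exact inh_of_cover X [({.u .F0}, ∅), (swapM, setM M)] (by simp [hfresh, hmodel])
      (by simp [word, spec, asg, swapM, setM]; decide)
  case F1 =>
    have x := X ⟨0, hm⟩ 0
    exact inh_of_cover X [({.u .F1}, ∅), (swapK X x ∅, {.z, .x x})] (by simp [hfresh, hvar])
      (by simp [word, spec, asg, swapK]; decide)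
  case F2 =>
    have x := X ⟨0, hm⟩ 0
    exact inh_of_cover X [({.u .F2}, ∅), (swapK X x ∅, {.z, .x x})] (by simp [hfresh, hvar])
      (by simp [word, spec, asg, swapK]; decide)
  case G j =>
    exact inh_of_cover X [({.u (.G j)}, ∅), (swapK X (X j 0) ∅, {.z, .x (X j 0)}),
        (swapK X (X j 0) {j}, {.z, .x (X j 0)})] (by simp [hfresh, hvar, hvarw])
      (by simp [word, spec, asg, swapK]; decide)
  case D l =>
    obtain ⟨i, r, rfl⟩ := exists_fmul3 l
    -- Any further variable of the clause makes `p` a `swap` event, which covers `d_{l,2}`.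
    obtain ⟨r', hr⟩ : ∃ r' : Fin 3, r ≠ r' := 
      (exists_ne r).imp fun _ h => h.symm
    exact inh_of_cover X [({.u (.D (fmul3 i r))}, ∅), (swapK X (X i r) ∅, {.z, .x (X i r)}),
        (swapK X (X i r') ∅, {.z, .x (X i r')})] (by simp [hfresh, hvar])
      (by simp [word, spec, asg, swapK, hX, hr]; decide)
  case T0 i =>
    rcases hM i with ⟨r, hr, hu⟩
    exact inh_of_cover X [({.u (.T0 i)}, ∅), (swapM, setM M),
        (swapK X (X i 0) ∅, {.z, .x (X i 0)}), (swapK X (X i 1) ∅, {.z, .x (X i 1)}),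
        (swapK X (X i 2) ∅, {.z, .x (X i 2)}), (swapK X (X i 0) {i}, {.z, .x (X i 0)})]
      (by simp [hfresh, hmodel, hvar, hvarw])
      (by
        have hne : ∀ r', r' ≠ r → X i r' ∉ M := fun r' h h' => h (hu r' h')
        fin_cases r
        · have h0 : X i 0 ∈ M := hr
          simp [word, spec, asg, swapK, swapM, setM, hX, h0, hne]; decide
        · have h0 : X i 1 ∈ M := hr
          simp [word, spec, asg, swapK, swapM, setM, hX, h0, hne]; decide
        · have h0 : X i 2 ∈ M := hr
          simp [word, spec, asg, swapK, swapM, setM, hX, h0, hne]; decide)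
  all_goals exact inh_of_not_mem X (by simp [spec])

/-! ### State separation -/

/-- Any two of the first `n` positions are separated by a support on one of the chains `ls`. -/
def separateB (n : ℕ) (ls : List (List (Interaction × Dir))) : Bool :=
  (List.range n).all fun s' => (List.range s').all fun s =>
    ls.any fun l => searchB l (sepG s s') || searchB l (sepG s' s)

variable (X) in
/-- The states of gadget `idx` are pairwise separable. -/
def Sep (idx : GIdx m) : Prop :=
  ∀ s s' : GS m idx, s ≠ s' →
    ∃ R : URegion tau1 (gadget m X false), R.sup ⟨idx, s⟩ ≠ R.sup ⟨idx, s'⟩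

/-- Assignments with only `nop` and `swap`, or with only `nop` and `set`, always extend. -/
theorem extends_of_empty (P S : Set (GEvent V m)) (h : P = ∅ ∨ S = ∅) :
    Extends X (asg ∅ P S) := by
  refine ⟨asg_mem _ _ _, fun idx => ?_⟩
  rcases h with rfl | rfl
  · exact realizes_of_nop_set (by simp)
  · obtain ⟨f, -, hf⟩ := realizes_nop_swap (word X (asg ∅ P ∅) idx) (by
      simp only [word, List.mem_map, forall_exists_index, and_imp, forall_apply_eq_imp_iff₂]
      intro p _
      by_cases hp : p.1 ∈ P <;> simp [asg, hp]) true
    exact ⟨f, hf⟩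

theorem sep_of_separate {idx : GIdx m} (n : ℕ) (hn : (spec X idx).length < n)
    (L : List (Set (GEvent V m) × Set (GEvent V m))) (hL : ∀ p ∈ L, p.1 = ∅ ∨ p.2 = ∅)
    (hc : separateB n (L.map fun p => word X (asg ∅ p.1 p.2) idx) = true) : Sep X idx := by
  have key : ∀ s s' : GS m idx, pos idx s < pos idx s' →
      ∃ R : URegion tau1 (gadget m X false), R.sup ⟨idx, s⟩ ≠ R.sup ⟨idx, s'⟩ := by
    intro s s' hlt
    have hs := pos_le X idx s
    have hs' := pos_le X idx s'
    have := List.all_eq_true.mp (List.all_eq_true.mp hc (pos idx s')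
      (List.mem_range.mpr (by omega))) (pos idx s) (List.mem_range.mpr hlt)
    simp only [List.any_map, List.any_eq_true, Function.comp_apply, Bool.or_eq_true] at this
    obtain ⟨p, hp, hps⟩ := this
    have hlen : (word X (asg ∅ p.1 p.2) idx).length = (spec X idx).length := by simp [word]
    obtain ⟨f, hne, hf⟩ : ∃ f : ℕ → Bool, f (pos idx s) ≠ f (pos idx s') ∧
        Realizes (word X (asg ∅ p.1 p.2) idx) f := by
      rcases hps with hps | hps <;>
      · obtain ⟨f, hfg, hf⟩ := searchB_sound hps
        refine ⟨f, ?_, hf⟩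
        have h1 := hfg (pos idx s) (by omega)
        have h2 := hfg (pos idx s') (by omega)
        simp only [sepG, beq_self_eq_true] at h1 h2
        intro he
        rw [he] at h1
        cases hv : f (pos idx s') <;> simp_all
    obtain ⟨R, -, hRs⟩ := region_of_extends X (extends_of_empty _ _ (hL p hp)) idx f hf
    exact ⟨R, by rwa [hRs, hRs]⟩
  intro s s' hne
  rcases lt_or_gt_of_ne ((pos_injective idx).ne hne) with h | h
  · exact key s s' h
  · obtain ⟨R, hR⟩ := key s' s h
    exact ⟨R, hR.symm⟩

theorem sep_all (idx : GIdx m) (hφ : ∀ i, Function.Injective (X i)) : Sep X idx := by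
  have hX : ∀ i r r', X i r = X i r' ↔ r = r' := fun i r r' => (hφ i).eq_iff
  cases idx
  case H j =>
    exact sep_of_separate 6 (by simp [spec])
      [({.k}, ∅), ({.mev}, ∅), ({.v j}, ∅), ({.u (.H j)}, ∅)] (by simp)
      (by simp [word, spec, asg]; decide)
  case F0 =>
    exact sep_of_separate 9 (by simp [spec])
      [({.k}, ∅), ({.mev}, ∅), ({.q 0}, ∅), ({.q 1}, ∅), ({.u .F0}, ∅)] (by simp)
      (by simp [word, spec, asg]; decide)
  case F1 =>
    exact sep_of_separate 6 (by simp [spec])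
      [({.k}, ∅), ({.q 2}, ∅), ({.q 3}, ∅), ({.u .F1}, ∅)] (by simp)
      (by simp [word, spec, asg]; decide)
  case F2 =>
    exact sep_of_separate 10 (by simp [spec])
      [({.k}, ∅), ({.q 2}, ∅), ({.q 0}, ∅), ({.z}, ∅), ({.q 1}, ∅), ({.q 3}, ∅), ({.u .F2}, ∅)]
      (by simp) (by simp [word, spec, asg]; decide)
  case G j =>
    exact sep_of_separate 9 (by simp [spec])
      [(∅, {.z}), ({.w j}, ∅), ({.y j}, ∅), ({.z}, ∅), ({.k}, ∅), ({.u (.G j)}, ∅)]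
      (by simp) (by simp [word, spec, asg]; decide)
  case D l =>
    exact sep_of_separate 9 (by simp [spec])
      [(∅, {.z}), ({.a l}, ∅), ({.p l}, ∅), ({.z}, ∅), ({.k}, ∅), ({.u (.D l)}, ∅)]
      (by simp) (by simp [word, spec, asg]; decide)
  case T0 i =>
    exact sep_of_separate 18 (by simp [spec])
      [(∅, {.x (X i 0)}), (∅, {.x (X i 1)}), (∅, {.x (X i 2)}), ({.v (fmul4 i 0)}, ∅),
        ({.w i}, ∅), ({.u (.T0 i)}, ∅), ({.k}, ∅), ({.a (fmul3 i 0)}, ∅), ({.a (fmul3 i 1)}, ∅),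
        ({.a (fmul3 i 2)}, ∅), ({.x (X i 0)}, ∅), ({.x (X i 1)}, ∅), ({.x (X i 2)}, ∅)]
      (by simp) (by simp [word, spec, asg, hX]; decide)
  case T1 i =>
    exact sep_of_separate 5 (by simp [spec])
      [({.x (X i 0)}, ∅), ({.v (fmul4 i 1)}, ∅), ({.x (X i 1)}, ∅), ({.u (.T1 i)}, ∅)]
      (by simp) (by simp [word, spec, asg, hX]; decide)
  case T2 i =>
    exact sep_of_separate 5 (by simp [spec])
      [({.x (X i 0)}, ∅), ({.v (fmul4 i 2)}, ∅), ({.x (X i 2)}, ∅), ({.u (.T2 i)}, ∅)]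
      (by simp) (by simp [word, spec, asg, hX]; decide)
  case T3 i =>
    exact sep_of_separate 5 (by simp [spec])
      [({.x (X i 1)}, ∅), ({.v (fmul4 i 3)}, ∅), ({.x (X i 2)}, ∅), ({.u (.T3 i)}, ∅)]
      (by simp) (by simp [word, spec, asg, hX]; decide)

end

/-- If `φ` has a one-in-three model, then for
`τ = {nop, set, swap, free}` the union `U^{σ1}_φ` has the `τ`-ESSP and the `τ`-SSP. -/
theorem sigma1_model_implies_essp_ssp {V : Type} [Fintype V] [DecidableEq V]
    (m : ℕ) (hm : 0 < m) (X : Fin m → Fin 3 → V) (hφ : Cubic m X)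
    (hM : ∃ M : Set V, OneInThree m X M) :
    UESSP tau1 (gadget m X false) ∧ USSP tau1 (gadget m X false) := by
  obtain ⟨hinj, -⟩ := hφ
  obtain ⟨M, hM⟩ := hM
  refine ⟨fun e idx => ?_, fun idx => sep_all idx hinj⟩
  change Inh X e idx
  cases e
  · exact inh_k hm hM hinj idx
  · exact inh_m idx
  · exact inh_z idx
  · exact inh_q _ idx
  · exact inh_v _ idx hinj
  · exact inh_w _ idx hinj
  · exact inh_y _ idx
  · exact inh_p _ idx
  · exact inh_a _ idx hinj
  · exact inh_x _ idx hinj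
  · exact inh_u _ idx hinj

end PetriNets
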